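/- Let w : U → GL(n, ℝ) be smooth on a nonempty open set U ⊆ ℝ^n, with Γ and T defined from w as usual, and suppose there exist constants C^{(i)}_{(j)(k)} with ∑_{a,b,c} z^{(i)}_a(x) T^a_{bc}(x) w^b_{(j)}(x) w^c_{(k)}(x) = C^{(i)}_{(j)(k)} for all x ∈ U. Then the constants C^{(i)}_{(j)(k)} are the structure constants of a Lie algebra on ℝ^n: they are skew-symmetric in the lower indices, C^{(i)}_{(j)(k)} = −C^{(i)}_{(k)(j)}, and they satisfy the Jacobi identity ∑_a ( C^{(a)}_{(j)(k)} C^{(i)}_{(a)(l)} + C^{(a)}_{(k)(l)} C^{(i)}_{(a)(j)} + C^{(a)}_{(l)(j)} C^{(i)}_{(a)(k)} ) = 0 for all i, j, k, l. -/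

import Mathlib

open scoped BigOperators

/-- Partial derivative `∂f/∂x^k` of a scalar function on `ℝ^n`. -/
noncomputable def pd {n : ℕ} (f : (Fin n → ℝ) → ℝ) (x : Fin n → ℝ) (k : Fin n) : ℝ :=
  fderiv ℝ f x (Pi.single k (1 : ℝ))

/-- `Γ^i_{jk}(x) = ∑_a z^{(a)}_j(x) ∂w^i_{(a)}(x)/∂x^k`. -/
noncomputable def Gam {n : ℕ} (w z : (Fin n → ℝ) → Fin n → Fin n → ℝ)
    (x : Fin n → ℝ) (i j k : Fin n) : ℝ :=
  ∑ a, z x a j * pd (fun y => w y i a) x k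

/-- The integrability object `T^i_{jk} = Γ^i_{jk} − Γ^i_{kj}`. -/
noncomputable def Tor {n : ℕ} (w z : (Fin n → ℝ) → Fin n → Fin n → ℝ)
    (x : Fin n → ℝ) (i j k : Fin n) : ℝ :=
  Gam w z x i j k - Gam w z x i k j

open VectorField in
lemma lieBracket_sum_smul_aux {n : ℕ} {V : (Fin n → ℝ) → (Fin n → ℝ)}
    {X : Fin n → (Fin n → ℝ) → (Fin n → ℝ)} {x : Fin n → ℝ} (c : Fin n → ℝ)
    (hX : ∀ a, DifferentiableAt ℝ (X a) x) :
    lieBracket ℝ V (fun y => ∑ a, c a • X a y) x = ∑ a, c a • lieBracket ℝ V (X a) x := by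
  have h : fderiv ℝ (fun y => ∑ a, c a • X a y) x = ∑ a, c a • fderiv ℝ (X a) x := by
    rw [fderiv_fun_sum (fun a _ => (hX a).fun_const_smul (c a))]
    exact Finset.sum_congr rfl (fun a _ => fderiv_fun_const_smul (hX a) (c a))
  simp only [lieBracket, h, map_sum, map_smul, smul_sub, Finset.sum_sub_distrib,
    sum_apply, smul_apply]

/-- If the translated components of the integrability object `T` are constant
(equation (10), i.e. `𝔯 = 0`), then the constants `C^{(i)}_{(j)(k)}` are the
structure constants of a Lie algebra on `ℝ^n`: they are skew-symmetric in the
lower indices and satisfy the Jacobi identity. -/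
theorem structure_constants_lie_algebra {n : ℕ} (hn : 1 ≤ n)
    (U : Set (Fin n → ℝ)) (hU : IsOpen U) (hne : U.Nonempty)
    (w z : (Fin n → ℝ) → Fin n → Fin n → ℝ)
    (hw : ∀ i a : Fin n, ContDiffOn ℝ (⊤ : ℕ∞) (fun x => w x i a) U)
    (hwz : ∀ x ∈ U, ∀ i j : Fin n,
      ∑ a, w x i a * z x a j = (if i = j then (1 : ℝ) else 0))
    (hzw : ∀ x ∈ U, ∀ i j : Fin n,
      ∑ a, z x i a * w x a j = (if i = j then (1 : ℝ) else 0))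
    (C : Fin n → Fin n → Fin n → ℝ)
    (hC : ∀ x ∈ U, ∀ i j k : Fin n,
      ∑ a, ∑ b, ∑ c, z x i a * Tor w z x a b c * w x b j * w x c k = C i j k) :
    (∀ i j k : Fin n, C i j k = -C i k j) ∧
    (∀ i j k l : Fin n,
      ∑ a, (C a j k * C i a l + C a k l * C i a j + C a l j * C i a k) = 0) := by
  classical
  obtain ⟨x₀, hx₀⟩ := hne
  let X : Fin n → (Fin n → ℝ) → (Fin n → ℝ) := fun j x a => w x a j
  have hXc : ∀ j, ∀ x ∈ U, ContDiffAt ℝ (⊤ : ℕ∞) (X j) x := by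
    intro j x hx
    rw [contDiffAt_pi]
    intro a
    exact (hw a j).contDiffAt (hU.mem_nhds hx)
  have hXd : ∀ j, ∀ x ∈ U, DifferentiableAt ℝ (X j) x := fun j x hx =>
    (hXc j x hx).differentiableAt (by simp)
  have hdX : ∀ j, ∀ x ∈ U, ∀ (v : Fin n → ℝ) (a : Fin n),
      fderiv ℝ (X j) x v a = ∑ c, v c * pd (fun y => w y a j) x c := by
    intro j x hx v a
    have h1 : fderiv ℝ (X j) x v a = fderiv ℝ (fun y => w y a j) x v := by
      rw [fderiv_apply (hXd j x hx) a]
      rfl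
    rw [h1]
    conv_lhs => rw [pi_eq_sum_univ' v]
    rw [map_sum]
    refine Finset.sum_congr rfl fun c _ => ?_
    rw [map_smul, smul_eq_mul, pd]
  have hG : ∀ x ∈ U, ∀ a c j : Fin n,
      ∑ b, Gam w z x a b c * w x b j = pd (fun y => w y a j) x c := by
    intro x hx a c j
    simp only [Gam, Finset.sum_mul]
    rw [Finset.sum_comm]
    have : ∀ d, ∑ b, z x d b * pd (fun y => w y a d) x c * w x b j
        = (if d = j then (1:ℝ) else 0) * pd (fun y => w y a d) x c := by
      intro d
      rw [← hzw x hx d j, Finset.sum_mul]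
      exact Finset.sum_congr rfl fun b _ => by ring
    simp [this]
  have hT : ∀ x ∈ U, ∀ a j k : Fin n,
      ∑ b, ∑ c, Tor w z x a b c * w x b j * w x c k
        = VectorField.lieBracket ℝ (X k) (X j) x a := by
    intro x hx a j k
    have e : VectorField.lieBracket ℝ (X k) (X j) x a
        = fderiv ℝ (X j) x (X k x) a - fderiv ℝ (X k) x (X j x) a := rfl
    rw [e, hdX j x hx, hdX k x hx]
    simp only [← hG x hx, Tor, sub_mul, Finset.sum_sub_distrib, Finset.mul_sum]
    congr 1
    · rw [Finset.sum_comm]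
      exact Finset.sum_congr rfl fun c _ => Finset.sum_congr rfl fun b _ => by
        simp only [X]; ring
    · exact Finset.sum_congr rfl fun c _ => Finset.sum_congr rfl fun b _ => by
        simp only [X]; ring
  have hC' : ∀ x ∈ U, ∀ i j k : Fin n,
      ∑ a, z x i a * VectorField.lieBracket ℝ (X k) (X j) x a = C i j k := by
    intro x hx i j k
    rw [← hC x hx i j k]
    refine Finset.sum_congr rfl fun a _ => ?_
    rw [← hT x hx, Finset.mul_sum]
    refine Finset.sum_congr rfl fun b _ => ?_
    rw [Finset.mul_sum]
    exact Finset.sum_congr rfl fun c _ => by ring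
  have hB : ∀ x ∈ U, ∀ j k : Fin n,
      VectorField.lieBracket ℝ (X k) (X j) x = ∑ i, C i j k • X i x := by
    intro x hx j k
    ext a
    simp only [Finset.sum_apply, Pi.smul_apply, smul_eq_mul, ← hC' x hx, Finset.sum_mul]
    rw [Finset.sum_comm]
    have : ∀ d, ∑ i, z x i d * VectorField.lieBracket ℝ (X k) (X j) x d * X i x a
        = (if a = d then (1:ℝ) else 0) * VectorField.lieBracket ℝ (X k) (X j) x d := by
      intro d
      rw [← hwz x hx a d, Finset.sum_mul]
      exact Finset.sum_congr rfl fun b _ => by simp only [X]; ring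
    simp [this]
  have hskew : ∀ i j k : Fin n, C i j k = -C i k j := by
    intro i j k
    rw [← hC' x₀ hx₀ i j k, ← hC' x₀ hx₀ i k j, VectorField.lieBracket_swap]
    simp
  refine ⟨hskew, ?_⟩
  have hD : ∀ j k l : Fin n,
      VectorField.lieBracket ℝ (X l) (VectorField.lieBracket ℝ (X k) (X j)) x₀
        = ∑ a, C a j k • VectorField.lieBracket ℝ (X l) (X a) x₀ := by
    intro j k l
    rw [← lieBracket_sum_smul_aux _ (fun a => hXd a x₀ hx₀)]
    refine Filter.EventuallyEq.lieBracket_vectorField_eq Filter.EventuallyEq.rfl ?_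
    filter_upwards [hU.mem_nhds hx₀] with y hy using hB y hy j k
  have hE : ∀ i j k l : Fin n,
      ∑ d, z x₀ i d *
        VectorField.lieBracket ℝ (X l) (VectorField.lieBracket ℝ (X k) (X j)) x₀ d
        = ∑ a, C a j k * C i a l := by
    intro i j k l
    rw [hD]
    simp only [Finset.sum_apply, Pi.smul_apply, smul_eq_mul, ← hC' x₀ hx₀ i, Finset.mul_sum]
    rw [Finset.sum_comm]
    exact Finset.sum_congr rfl fun c _ => Finset.sum_congr rfl fun b _ => by ring
  intro i j k l
  have hJ := VectorField.leibniz_identity_lieBracket (𝕜 := ℝ) (n := ((⊤ : ℕ∞) : WithTop ℕ∞))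
    (by simpa using (WithTop.coe_le_coe.2 le_top : ((2 : ℕ∞) : WithTop ℕ∞) ≤ ((⊤ : ℕ∞) : WithTop ℕ∞)))
    (hXc l x₀ hx₀) (hXc k x₀ hx₀) (hXc j x₀ hx₀)
  rw [VectorField.lieBracket_swap (V := VectorField.lieBracket ℝ (X l) (X k))] at hJ
  have hJ' : ∑ a, C a j k * C i a l = -(∑ a, C a k l * C i a j) + ∑ a, C a j l * C i a k := by
    rw [← hE i j k l, ← hE i k l j, ← hE i j l k, hJ, ← Finset.sum_neg_distrib,
      ← Finset.sum_add_distrib]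
    exact Finset.sum_congr rfl fun d _ => by
      simp only [Pi.add_apply, Pi.neg_apply]; ring
  have h3 : ∑ a, C a j l * C i a k = -∑ a, C a l j * C i a k := by
    rw [← Finset.sum_neg_distrib]
    exact Finset.sum_congr rfl fun d _ => by rw [hskew d j l]; ring
  rw [Finset.sum_add_distrib, Finset.sum_add_distrib, hJ', h3]
  ring
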